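/- Let X be a nonempty subset of a real Hilbert space H (with the induced metric d(x,y) = ‖x − y‖) and T a mapping of X into itself. Then T is firmly metrically nonspreading if and only if T is firmly nonexpansive, i.e., ‖Tx − Ty‖² ≤ ⟪Tx − Ty, x − y⟫ for all x,y ∈ X. -/

import Mathlib

open scoped RealInnerProductSpace

/-!
For four points `a, b, x, y`, the inner product of `a - b` and `x - y` depends only on distances:
twice its real part is `d(a,y)² + d(b,x)² - d(a,x)² - d(b,y)²`. With `a = Tx` and `b = Ty`, the two
conditions therefore become the same inequality for each pair `x, y`.
-/

section Affine

variable (𝕜 : Type*) {V P : Type*} [RCLike 𝕜] [SeminormedAddCommGroup V] [InnerProductSpace 𝕜 V]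
  [PseudoMetricSpace P] [NormedAddTorsor V P]

theorem two_mul_re_inner_vsub_vsub_eq_dist_sq (a b x y : P) :
    2 * RCLike.re (inner 𝕜 (a -ᵥ b) (x -ᵥ y)) =
      dist a y ^ 2 + dist b x ^ 2 - dist a x ^ 2 - dist b y ^ 2 := by
  -- Take `y` as origin and expand the squared distances to `x` by the law of cosines.
  have dist_sq_eq (p : P) : dist p x ^ 2 =
      dist p y ^ 2 - 2 * RCLike.re (inner 𝕜 (p -ᵥ y) (x -ᵥ y)) + dist x y ^ 2 := by
    simp only [dist_eq_norm_vsub V, ← norm_sub_sq, vsub_sub_vsub_cancel_right]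
  have re_inner_eq : RCLike.re (inner 𝕜 (a -ᵥ b) (x -ᵥ y)) =
      RCLike.re (inner 𝕜 (a -ᵥ y) (x -ᵥ y)) - RCLike.re (inner 𝕜 (b -ᵥ y) (x -ᵥ y)) := by
    rw [← vsub_sub_vsub_cancel_right a b y, inner_sub_left, map_sub]
  linarith [dist_sq_eq a, dist_sq_eq b]

theorem stmt_3_general (X : Set P) (T : X → P) :
    (∀ x y : X, 2 * dist (T x) (T y) ^ 2 + dist (T x) x ^ 2 + dist (T y) y ^ 2
      ≤ dist (T x) y ^ 2 + dist (T y) x ^ 2)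
    ↔ ∀ x y : X, dist (T x) (T y) ^ 2 ≤
      RCLike.re (inner 𝕜 (T x -ᵥ T y) ((x : P) -ᵥ (y : P))) := by
  refine forall₂_congr fun x y => ?_
  have four_points := two_mul_re_inner_vsub_vsub_eq_dist_sq 𝕜 (T x) (T y) (x : P) y
  constructor <;> intro h <;> linarith

end Affine

/-- A self-mapping of a nonempty subset of a real Hilbert space is firmly metrically
nonspreading (for the induced metric) if and only if it is firmly nonexpansive. -/
theorem stmt_3 {H : Type*} [NormedAddCommGroup H] [InnerProductSpace ℝ H]
    [CompleteSpace H] (X : Set H) (hX : X.Nonempty) (T : X → X) :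
    (∀ x y : X, 2 * dist (T x) (T y) ^ 2 + dist (T x) x ^ 2 + dist (T y) y ^ 2
      ≤ dist (T x) y ^ 2 + dist (T y) x ^ 2)
    ↔ (∀ x y : X, ‖(T x : H) - (T y : H)‖ ^ 2 ≤ ⟪(T x : H) - (T y : H), (x : H) - (y : H)⟫) := by
  simpa only [Subtype.dist_eq, dist_eq_norm, vsub_eq_sub, RCLike.re_to_real] using
    stmt_3_general ℝ X fun x => (T x : H)
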